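/- Let r ≥ 3 and q = p^h with p prime, h ≥ 1, and let V be a quasi-Hermitian variety of PG(r,q^2) whose characteristic vector v^V belongs to C_p. Then every line of PG(r,q^2) meets V in a number of points congruent to 1 modulo p; in particular no line of PG(r,q^2) is disjoint from V. -/

import Mathlib

/-!
Common framework: `ProjPoint F n` is the set of points of the projective space
PG(n-1, |F|) (so PG(r, q²) corresponds to `n = r + 1` and `Fintype.card F = q ^ 2`).
Projective subspaces of projective dimension `k` are the submodules of `Fin n → F`
of `finrank` equal to `k + 1`; lines have finrank 2, planes finrank 3 and
hyperplanes finrank `n - 1 = r`.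
-/

open Module Matrix

/-- The points of the projective space PG(n-1, |F|): one-dimensional subspaces
of `F^n`. -/
def ProjPoint (F : Type) [Field F] (n : ℕ) : Type :=
  {W : Submodule F (Fin n → F) // finrank F W = 1}

/-- The set of projective points lying in a given subspace `W`. -/
def pointsIn (F : Type) [Field F] (n : ℕ) (W : Submodule F (Fin n → F)) :
    Set (ProjPoint F n) :=
  {P | P.1 ≤ W}

/-- The number of points of `V` lying in the subspace `W`. -/
noncomputable def secant (F : Type) [Field F] (n : ℕ) (V : Set (ProjPoint F n))
    (W : Submodule F (Fin n → F)) : ℕ :=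
  (V ∩ pointsIn F n W).ncard

/-- The characteristic vector of a set of projective points, with values in `F_p`. -/
noncomputable def charVec (F : Type) [Field F] (p n : ℕ) (S : Set (ProjPoint F n)) :
    ProjPoint F n → ZMod p :=
  Set.indicator S 1

/-- `C_p`: the `F_p`-code spanned by the characteristic vectors of hyperplanes. -/
def hypCode (F : Type) [Field F] (p n : ℕ) :
    Submodule (ZMod p) (ProjPoint F n → ZMod p) :=
  Submodule.span (ZMod p)
    {v | ∃ H : Submodule F (Fin n → F), finrank F H = n - 1 ∧
      v = charVec F p n (pointsIn F n H)}

/-- A quasi-Hermitian variety of PG(r, q²): it has the size of a non-singular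
Hermitian variety and the same two intersection numbers with hyperplanes.
(All identities are stated multiplied through by `q² - 1`.) -/
def IsQuasiHermitian (F : Type) [Field F] (q r : ℕ)
    (V : Set (ProjPoint F (r + 1))) : Prop :=
  (V.ncard : ℤ) * ((q : ℤ) ^ 2 - 1)
      = ((q : ℤ) ^ (r + 1) + (-1) ^ r) * ((q : ℤ) ^ r - (-1) ^ r) ∧
  ∀ H : Submodule F (Fin (r + 1) → F), finrank F H = r →
    ((secant F (r + 1) V H : ℤ) * ((q : ℤ) ^ 2 - 1)
        = ((q : ℤ) ^ r + (-1) ^ (r - 1)) * ((q : ℤ) ^ (r - 1) - (-1) ^ (r - 1)) ∨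
     (secant F (r + 1) V H : ℤ) * ((q : ℤ) ^ 2 - 1)
        = ((q : ℤ) ^ 2 - 1)
          + (q : ℤ) ^ 2 * (((q : ℤ) ^ (r - 1) + (-1) ^ r) * ((q : ℤ) ^ (r - 2) - (-1) ^ r)))

/-- The zero set, in PG(n-1,|F|), of the Hermitian form `x ↦ xᵀ A x^(q)`. -/
def hermSet (F : Type) [Field F] (q n : ℕ) (A : Matrix (Fin n) (Fin n) F) :
    Set (ProjPoint F n) :=
  {P | ∀ x ∈ P.1, ∑ i, ∑ j, x i * A i j * (x j) ^ q = 0}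

/-- A non-singular Hermitian variety of PG(n-1, q²). -/
def IsNonsingHermitian (F : Type) [Field F] (q n : ℕ)
    (V : Set (ProjPoint F n)) : Prop :=
  ∃ A : Matrix (Fin n) (Fin n) F, IsUnit A.det ∧
    Aᵀ = A.map (fun a => a ^ q) ∧ V = hermSet F q n A

/-- A singular Hermitian variety of PG(n-1, q²) whose singular space (the radical
of the Hermitian form) has projective dimension `d`. -/
def IsSingularHermitian (F : Type) [Field F] (q n d : ℕ)
    (S : Set (ProjPoint F n)) : Prop :=
  ∃ A : Matrix (Fin n) (Fin n) F,
    Aᵀ = A.map (fun a => a ^ q) ∧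
    finrank F (LinearMap.ker (Matrix.toLin' Aᵀ)) = d + 1 ∧
    S = hermSet F q n A

/-- A `d`-singular quasi-Hermitian variety of PG(r, q²). -/
def IsSingularQuasiHermitian (F : Type) [Field F] (q r d : ℕ)
    (S : Set (ProjPoint F (r + 1))) : Prop :=
  ∃ S₀ : Set (ProjPoint F (r + 1)), IsSingularHermitian F q (r + 1) d S₀ ∧
    S.ncard = S₀.ncard ∧
    ∀ H : Submodule F (Fin (r + 1) → F), finrank F H = r →
      ∃ H₀ : Submodule F (Fin (r + 1) → F), finrank F H₀ = r ∧
        secant F (r + 1) S H = secant F (r + 1) S₀ H₀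

/-- `U` is a classical unital (Hermitian curve) of the plane `π` of PG(n-1, q²):
in some coordinatization `e` of `π`, it is the zero set of a non-degenerate
Hermitian form on `F³`. -/
def IsClassicalUnital (F : Type) [Field F] (q n : ℕ)
    (π : Submodule F (Fin n → F)) (U : Set (ProjPoint F n)) : Prop :=
  ∃ e : (Fin 3 → F) →ₗ[F] (Fin n → F), LinearMap.ker e = ⊥ ∧ LinearMap.range e = π ∧
    ∃ A : Matrix (Fin 3) (Fin 3) F, IsUnit A.det ∧ Aᵀ = A.map (fun a => a ^ q) ∧
      U = {P | ∃ y : Fin 3 → F, y ≠ 0 ∧ P.1 = Submodule.span F {e y} ∧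
        ∑ i, ∑ j, y i * A i j * (y j) ^ q = 0}

/-!
Modulo any `m` dividing `|F|`, a projective subspace with at least one point has
`1 + |F| + |F|² + ⋯ ≡ 1` points. A subspace of projective dimension at least one meets every
hyperplane in such a subspace, so all of these subspaces have the same dot product, `1`, with each
generator of the hyperplane code, hence equal dot products with each codeword. Comparing a
subspace `W` with the whole space, for the codeword of a set `V`, gives `|V ∩ W| ≡ |V|`. For a
quasi-Hermitian variety, reducing the size formula modulo `q` gives `|V| ≡ 1`.
-/

open scoped LinearAlgebra.Projectivization

theorem inf_ne_bot_of_finrank_lt_add_finrank {K E : Type*} [DivisionRing K] [AddCommGroup E]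
    [Module K E] [FiniteDimensional K E] {U W : Submodule K E}
    (h : finrank K E < finrank K U + finrank K W) : U ⊓ W ≠ ⊥ := fun inf_eq_bot =>
  h.not_ge (Submodule.finrank_add_finrank_le_of_disjoint (disjoint_iff.mpr inf_eq_bot))

section Points

variable {F : Type} [Field F] {n : ℕ}

instance ProjPoint.finite [Finite F] : Finite (ProjPoint F n) :=
  Subtype.finite

theorem pointsIn_top : pointsIn F n ⊤ = Set.univ :=
  Set.eq_univ_of_forall fun _ => le_top (α := Submodule F (Fin n → F))

theorem pointsIn_inf (U W : Submodule F (Fin n → F)) :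
    pointsIn F n (U ⊓ W) = pointsIn F n U ∩ pointsIn F n W :=
  Set.ext fun _ => le_inf_iff (α := Submodule F (Fin n → F))

theorem secant_top (V : Set (ProjPoint F n)) : secant F n V ⊤ = V.ncard := by
  rw [secant, pointsIn_top, Set.inter_univ]

/-- The points of the ambient space lying in `W`, identified with the points of Mathlib's
projective space on `W`; it transports Mathlib's point count to `pointsIn`. -/
noncomputable def pointsInEquivProjectivization (W : Submodule F (Fin n → F)) :
    pointsIn F n W ≃ ℙ F W :=
  calc
    pointsIn F n W ≃ {U : Set.Iic W // finrank F U.1 = 1} :=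
      { toFun P := ⟨⟨P.1.1, P.2⟩, P.1.2⟩
        invFun U := ⟨⟨U.1.1, U.2⟩, U.1.2⟩ }
    _ ≃ {U : Submodule F W // finrank F U = 1} :=
      (W.mapIic.toEquiv.subtypeEquiv fun U => by
        rw [OrderIso.coe_toEquiv, Submodule.coe_mapIic_apply,
          Submodule.finrank_map_subtype_eq]).symm
    _ ≃ ℙ F W := (Projectivization.equivSubmodule F W).symm

theorem ncard_pointsIn [Finite F] (W : Submodule F (Fin n → F)) :
    (pointsIn F n W).ncard = ∑ i ∈ Finset.range (finrank F W), Nat.card F ^ i := by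
  rw [← Nat.card_coe_set_eq, Nat.card_congr (pointsInEquivProjectivization W),
    Projectivization.card_of_finrank F W rfl]

theorem ncard_pointsIn_modEq_one [Finite F] {m : ℕ} (hm : m ∣ Nat.card F)
    {W : Submodule F (Fin n → F)} (hW : W ≠ ⊥) : (pointsIn F n W).ncard ≡ 1 [MOD m] := by
  have card_eq_zero : (Nat.card F : ZMod m) = 0 := (ZMod.natCast_eq_zero_iff _ _).mpr hm
  have finrank_ne_zero : finrank F W ≠ 0 := mt Submodule.finrank_eq_zero.mp hW
  rw [← ZMod.natCast_eq_natCast_iff, ncard_pointsIn]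
  simp [card_eq_zero, zero_geom_sum, finrank_ne_zero]

end Points

section HyperplaneCode

variable {F : Type} [Field F] {m n : ℕ}

theorem charVec_dotProduct_charVec [Fintype (ProjPoint F n)] (S T : Set (ProjPoint F n)) :
    charVec F m n S ⬝ᵥ charVec F m n T = ((S ∩ T).ncard : ZMod m) := by
  classical
  calc
    charVec F m n S ⬝ᵥ charVec F m n T = ∑ P, (S ∩ T).indicator 1 P := by
      simp only [dotProduct, charVec, Set.inter_indicator_one, Pi.mul_apply]
    _ = ((S ∩ T).ncard : ZMod m) := by
      simp [Set.indicator_apply, Set.ncard_eq_toFinset_card', ← Set.filter_mem_univ_eq_toFinset]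

theorem charVec_hyperplane_dotProduct_charVec_pointsIn [Finite F] [Fintype (ProjPoint F n)]
    (hm : m ∣ Nat.card F) {H W : Submodule F (Fin n → F)} (hH : finrank F H = n - 1)
    (hW : 2 ≤ finrank F W) :
    charVec F m n (pointsIn F n H) ⬝ᵥ charVec F m n (pointsIn F n W) = 1 := by
  have inf_ne_bot : H ⊓ W ≠ ⊥ := inf_ne_bot_of_finrank_lt_add_finrank <| by
    rw [finrank_fin_fun]
    omega
  rw [charVec_dotProduct_charVec, ← pointsIn_inf, ← Nat.cast_one, ZMod.natCast_eq_natCast_iff]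
  exact ncard_pointsIn_modEq_one hm inf_ne_bot

theorem dotProduct_charVec_pointsIn_eq_of_mem_hypCode [Finite F] [Fintype (ProjPoint F n)]
    (hm : m ∣ Nat.card F) {U W : Submodule F (Fin n → F)} (hU : 2 ≤ finrank F U)
    (hW : 2 ≤ finrank F W) {v : ProjPoint F n → ZMod m} (hv : v ∈ hypCode F m n) :
    v ⬝ᵥ charVec F m n (pointsIn F n U) = v ⬝ᵥ charVec F m n (pointsIn F n W) := by
  induction hv using Submodule.span_induction with
  | mem v hv =>
    obtain ⟨H, hH, rfl⟩ := hv
    rw [charVec_hyperplane_dotProduct_charVec_pointsIn hm hH hU,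
      charVec_hyperplane_dotProduct_charVec_pointsIn hm hH hW]
  | zero => rw [zero_dotProduct, zero_dotProduct]
  | add v w _ _ hv hw => rw [add_dotProduct, add_dotProduct, hv, hw]
  | smul a v _ hv => rw [smul_dotProduct, smul_dotProduct, hv]

theorem secant_modEq_ncard_of_charVec_mem_hypCode [Finite F] (hm : m ∣ Nat.card F)
    {V : Set (ProjPoint F n)} (hV : charVec F m n V ∈ hypCode F m n)
    {W : Submodule F (Fin n → F)} (hW : 2 ≤ finrank F W) :
    secant F n V W ≡ V.ncard [MOD m] := by
  have := Fintype.ofFinite (ProjPoint F n)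
  have two_le_finrank_top : 2 ≤ finrank F (⊤ : Submodule F (Fin n → F)) :=
    hW.trans (Submodule.finrank_mono le_top)
  have dotProduct_eq := dotProduct_charVec_pointsIn_eq_of_mem_hypCode hm hW two_le_finrank_top hV
  rwa [charVec_dotProduct_charVec, charVec_dotProduct_charVec, ZMod.natCast_eq_natCast_iff,
    ← secant, ← secant, secant_top] at dotProduct_eq

end HyperplaneCode

theorem IsQuasiHermitian.ncard_modEq_one {F : Type} [Field F] {q r : ℕ} (hr : r ≠ 0)
    {V : Set (ProjPoint F (r + 1))} (hV : IsQuasiHermitian F q r V) :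
    V.ncard ≡ 1 [MOD q] := by
  have size_mod_q := congrArg (Int.cast : ℤ → ZMod q) hV.1
  have sign_sq : ((-1 : ZMod q) ^ r) * (-1) ^ r = 1 := by rw [← mul_pow]; simp
  push_cast at size_mod_q
  rw [ZMod.natCast_self, zero_pow two_ne_zero, zero_pow r.succ_ne_zero, zero_pow hr] at size_mod_q
  rw [← ZMod.natCast_eq_natCast_iff, Nat.cast_one]
  linear_combination -size_mod_q + sign_sq

theorem stmt2_general {F : Type} [Field F] [Finite F] {m n : ℕ} (hm : m ∣ Nat.card F)
    (hm_ne_one : m ≠ 1) {V : Set (ProjPoint F n)} (hV : V.ncard ≡ 1 [MOD m])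
    (hcode : charVec F m n V ∈ hypCode F m n) {W : Submodule F (Fin n → F)}
    (hW : 2 ≤ finrank F W) :
    secant F n V W ≡ 1 [MOD m] ∧ (V ∩ pointsIn F n W).Nonempty := by
  have secant_modEq_one : secant F n V W ≡ 1 [MOD m] :=
    (secant_modEq_ncard_of_charVec_mem_hypCode hm hcode hW).trans hV
  refine ⟨secant_modEq_one, Set.nonempty_of_ncard_ne_zero fun secant_eq_zero => hm_ne_one ?_⟩
  rw [secant, secant_eq_zero] at secant_modEq_one
  exact Nat.dvd_one.mp (Nat.modEq_zero_iff_dvd.mp secant_modEq_one.symm)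

/-- every line of PG(r, q²) meets a quasi-Hermitian variety whose
characteristic vector lies in `C_p` in `1 (mod p)` points; in particular no line is
disjoint from it. -/
theorem stmt2 (p h q r : ℕ) (hp : p.Prime) (hh : 1 ≤ h) (hq : q = p ^ h) (hr : 3 ≤ r)
    (F : Type) [Field F] [Fintype F] (hF : Fintype.card F = q ^ 2)
    (V : Set (ProjPoint F (r + 1))) (hV : IsQuasiHermitian F q r V)
    (hcode : charVec F p (r + 1) V ∈ hypCode F p (r + 1)) :
    ∀ L : Submodule F (Fin (r + 1) → F), finrank F L = 2 →
      secant F (r + 1) V L ≡ 1 [MOD p] ∧ (V ∩ pointsIn F (r + 1) L).Nonempty := by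
  have p_dvd_q : p ∣ q := hq ▸ dvd_pow_self p (Nat.one_le_iff_ne_zero.mp hh)
  have p_dvd_card : p ∣ Nat.card F := by
    rw [Nat.card_eq_fintype_card, hF]
    exact dvd_pow p_dvd_q two_ne_zero
  exact fun L hL => stmt2_general p_dvd_card hp.ne_one
    ((hV.ncard_modEq_one (by omega)).of_dvd p_dvd_q) hcode hL.ge
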